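/- For every integer A ≥ 1, every C > 1, and every η ≥ 2, the following linear bandit instance with d = 2A+1 arms satisfies C^{π*} ≤ 4C and D²_{π*} ≥ C·A. The instance: arms a_1, …, a_{2A+1} with feature vectors φ(a_i) = e_i ∈ ℝ^{2A+1}; reference policy π^ref(a_i) = 1/(2AC) for i ≤ 2A and π^ref(a_{2A+1}) = (C−1)/C; true parameter θ* = Σ_{i ≤ A} e_i (so the reward of arm a_i is ⟨θ*, e_i⟩); function class 𝒢 = { a ↦ ⟨θ, φ(a)⟩ : ‖θ‖_∞ ≤ 1 }. -/

import Mathlib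

open Finset

/-- Forward-KL-regularized objective `J(π; g) = ⟨g, π⟩ - η⁻¹ KL(π^ref ‖ π)`
for a bandit with finite action set. -/
noncomputable def J {A : Type*} [Fintype A] (η : ℝ) (pref g p : A → ℝ) : ℝ :=
  ∑ a, g a * p a - η⁻¹ * ∑ a, pref a * Real.log (pref a / p a)

/-- `p` maximizes `J(·; g)` over the simplex `Δ(A)` (on which the objective is `-∞`
unless the policy has full support, so it suffices to compare with full-support
distributions). -/
def IsMaximizer {A : Type*} [Fintype A] (η : ℝ) (pref g p : A → ℝ) : Prop :=
  (∀ a, 0 ≤ p a) ∧ ∑ a, p a = 1 ∧ (∀ a, 0 < p a) ∧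
    ∀ q : A → ℝ, (∀ a, 0 ≤ q a) → ∑ a, q a = 1 → (∀ a, 0 < q a) →
      J η pref g q ≤ J η pref g p

/-!
Write `ρ = π^ref / π*`. Moving mass between two arms, the first-order condition for `π*` reads
`ρ(j) - ρ(i) = η (r(i) - r(j))`. Hence `π* / π^ref` is monotone in the reward, so it is largest on
the arms of reward `1`; these have reference mass `1 / (2C)`, which bounds the ratio by `2C`.
The same identity gives `π*(j) ≤ π^ref(j) / η` on arms of reward `0`, so `π*` puts mass at least
`1 - η⁻¹` on arms of reward `1`, and there `D² ≥ 1 / π^ref = 2AC`, as a pair of parameters that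
differs in a single coordinate shows.
-/

theorem hasDerivAt_mul_log_div {c x : ℝ} (hx : x ≠ 0) :
    HasDerivAt (fun y => c * Real.log (c / y)) (-(c / x)) x := by
  rcases eq_or_ne c 0 with rfl | hc
  · simpa using hasDerivAt_const x (0 : ℝ)
  · have hdiv : HasDerivAt (fun y => c / y) (-c / x ^ 2) x := by
      simpa using (hasDerivAt_const x c).fun_div (hasDerivAt_id x) hx
    refine ((hdiv.log (div_ne_zero hc hx)).const_mul c).congr_deriv ?_
    field_simp

section Maximizer

variable {ι : Type*} [Fintype ι] {η δ : ℝ} {pref g p v : ι → ℝ}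

theorem hasDerivAt_J_add_smul (η : ℝ) (pref g v : ι → ℝ) (hp : ∀ a, p a ≠ 0) :
    HasDerivAt (fun t : ℝ => J η pref g (p + t • v))
      (∑ a, (g a + η⁻¹ * (pref a / p a)) * v a) 0 := by
  have hline (a : ι) : HasDerivAt (fun t : ℝ => (p + t • v) a) (v a) 0 := by
    simpa using ((hasDerivAt_id (0 : ℝ)).mul_const (v a)).const_add (p a)
  have hlog (a : ι) : HasDerivAt
      (fun t : ℝ => pref a * Real.log (pref a / (p + t • v) a)) (-(pref a / p a) * v a) 0 := by
    have hbase : HasDerivAt (fun y => pref a * Real.log (pref a / y)) (-(pref a / p a))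
        ((p + (0 : ℝ) • v) a) := by
      simpa using hasDerivAt_mul_log_div (hp a)
    exact HasDerivAt.comp (h := fun t : ℝ => (p + t • v) a) 0 hbase (hline a)
  refine ((HasDerivAt.fun_sum fun a _ => (hline a).const_mul (g a)).fun_sub
    ((HasDerivAt.fun_sum fun a _ => hlog a).const_mul η⁻¹)).congr_deriv ?_
  rw [mul_sum, ← sum_sub_distrib]
  exact sum_congr rfl fun a _ => by ring

namespace IsMaximizer

theorem nonneg (h : IsMaximizer η pref g p) (a : ι) : 0 ≤ p a := h.1 a

theorem sum_eq_one (h : IsMaximizer η pref g p) : ∑ a, p a = 1 := h.2.1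

theorem pos (h : IsMaximizer η pref g p) (a : ι) : 0 < p a := h.2.2.1 a

theorem isLocalMax_add_smul (h : IsMaximizer η pref g p) (hv : ∑ a, v a = 0) :
    IsLocalMax (fun t : ℝ => J η pref g (p + t • v)) 0 := by
  obtain ⟨-, hsum, hpos, hmax⟩ := h
  have hev : ∀ᶠ t : ℝ in nhds 0, ∀ a, 0 < (p + t • v) a := by
    refine Filter.eventually_all.2 fun a => ?_
    have hcont : Continuous fun t : ℝ => (p + t • v) a := by
      simp only [Pi.add_apply, Pi.smul_apply]
      fun_prop
    exact hcont.continuousAt.eventually_const_lt (by simpa using hpos a)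
  filter_upwards [hev] with t ht
  have hsum_t : ∑ a, (p + t • v) a = 1 := by
    simp only [Pi.add_apply, Pi.smul_apply, smul_eq_mul, sum_add_distrib, ← mul_sum, hsum, hv,
      mul_zero, add_zero]
  simpa using hmax _ (fun a => (ht a).le) hsum_t ht

theorem sum_mul_eq_zero_of_sum_eq_zero (h : IsMaximizer η pref g p) (hv : ∑ a, v a = 0) :
    ∑ a, (g a + η⁻¹ * (pref a / p a)) * v a = 0 :=
  (h.isLocalMax_add_smul hv).hasDerivAt_eq_zero
    (hasDerivAt_J_add_smul η pref g v fun a => (h.pos a).ne')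

theorem pref_div_sub_pref_div (h : IsMaximizer η pref g p) (hη : η ≠ 0) (i j : ι) :
    pref j / p j - pref i / p i = η * (g i - g j) := by
  classical
  have hbalance : g i + η⁻¹ * (pref i / p i) - (g j + η⁻¹ * (pref j / p j)) = 0 := by
    have hzero := h.sum_mul_eq_zero_of_sum_eq_zero (v := Pi.single i 1 - Pi.single j 1) (by simp)
    simpa [mul_sub, Pi.single_apply] using hzero
  field_simp at hbalance
  linarith

theorem mul_pref_le_mul_pref (h : IsMaximizer η pref g p) (hη : 0 < η) {i j : ι}
    (hij : g j ≤ g i) : p j * pref i ≤ p i * pref j := by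
  have hdiv : pref i / p i ≤ pref j / p j := by
    rw [← sub_nonneg, h.pref_div_sub_pref_div hη.ne']
    exact mul_nonneg hη.le (sub_nonneg.2 hij)
  rw [div_le_div_iff₀ (h.pos i) (h.pos j)] at hdiv
  linarith

theorem mul_sum_pref_le_pref (h : IsMaximizer η pref g p) (hη : 0 < η) {s : Finset ι} {j : ι}
    (hj : 0 ≤ pref j) (hs : ∀ i ∈ s, g j ≤ g i) : p j * ∑ i ∈ s, pref i ≤ pref j :=
  calc p j * ∑ i ∈ s, pref i = ∑ i ∈ s, p j * pref i := mul_sum ..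
    _ ≤ ∑ i ∈ s, p i * pref j := sum_le_sum fun i hi => h.mul_pref_le_mul_pref hη (hs i hi)
    _ = (∑ i ∈ s, p i) * pref j := (sum_mul ..).symm
    _ ≤ 1 * pref j := by
      gcongr
      exact (sum_le_univ_sum_of_nonneg h.nonneg).trans_eq h.sum_eq_one
    _ = pref j := one_mul _

theorem mul_sub_mul_le_pref (h : IsMaximizer η pref g p) (hη : η ≠ 0) {i : ι}
    (hi : 0 ≤ pref i) (j : ι) : η * (g i - g j) * p j ≤ pref j := by
  rw [← le_div_iff₀ (h.pos j), ← h.pref_div_sub_pref_div hη]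
  exact sub_le_self _ (div_nonneg hi (h.pos i).le)

theorem one_sub_le_sum_of_gap [DecidableEq ι] (h : IsMaximizer η pref g p) (hη : 0 < η)
    (hδ : 0 < δ) {s : Finset ι} {i : ι} (hi : 0 ≤ pref i) (hgap : ∀ j ∉ s, g j + δ ≤ g i) :
    1 - (η * δ)⁻¹ * ∑ j ∈ sᶜ, pref j ≤ ∑ j ∈ s, p j := by
  have hbad (j : ι) (hj : j ∈ sᶜ) : p j ≤ (η * δ)⁻¹ * pref j := by
    rw [le_inv_mul_iff₀ (mul_pos hη hδ)]
    refine le_trans ?_ (h.mul_sub_mul_le_pref hη.ne' hi j)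
    gcongr
    · exact h.nonneg j
    · linarith [hgap j (mem_compl.1 hj)]
  have hcompl : ∑ j ∈ sᶜ, p j ≤ (η * δ)⁻¹ * ∑ j ∈ sᶜ, pref j := by
    rw [mul_sum]
    exact sum_le_sum hbad
  linarith [sum_add_sum_compl s p, h.sum_eq_one]

end IsMaximizer

end Maximizer

section DivergenceRatios

variable {ι : Type*} [Fintype ι]

/-- The quotients whose supremum is the `D²`-divergence at arm `i`, for the linear class with
standard-basis features and `‖θ‖_∞ ≤ 1`: as `φ(a_j) = e_j`, the value of `θ` at arm `j` is `θ j`.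
A pair `θ = θ'` contributes `0 / 0 = 0`, which does not affect the supremum. -/
def divergenceRatios (pref : ι → ℝ) (i : ι) : Set ℝ :=
  {x | ∃ θ θ' : ι → ℝ, (∀ j, |θ j| ≤ 1) ∧ (∀ j, |θ' j| ≤ 1) ∧
    x = (θ i - θ' i) ^ 2 / ∑ j, pref j * (θ j - θ' j) ^ 2}

theorem one_div_mem_divergenceRatios (pref : ι → ℝ) (i : ι) :
    1 / pref i ∈ divergenceRatios pref i := by
  classical
  refine ⟨Pi.single i 1, 0, fun j => ?_, by simp, by simp [Pi.single_apply]⟩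
  rcases eq_or_ne j i with rfl | hji <;> simp [*]

theorem sum_div_le_sum_mul_of_mem_upperBounds {pref p D2 : ι → ℝ} (hp : ∀ i, 0 ≤ p i)
    (hpref : ∀ i, 0 ≤ pref i) (hD2 : ∀ i, D2 i ∈ upperBounds (divergenceRatios pref i))
    (s : Finset ι) :
    ∑ i ∈ s, p i / pref i ≤ ∑ i, p i * D2 i :=
  calc ∑ i ∈ s, p i / pref i ≤ ∑ i, p i / pref i :=
        sum_le_univ_sum_of_nonneg fun i => div_nonneg (hp i) (hpref i)
    _ ≤ ∑ i, p i * D2 i := by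
      refine sum_le_sum fun i _ => ?_
      rw [div_eq_mul_one_div]
      exact mul_le_mul_of_nonneg_left (hD2 i (one_div_mem_divergenceRatios pref i)) (hp i)

end DivergenceRatios

section HardInstance

variable {A : ℕ} {C η : ℝ} {p : Fin (2 * A + 1) → ℝ}

/-- The reference policy of the hard instance. Arms are indexed from `0`, so the arm `a_{2A+1}`
carrying the mass `(C - 1) / C` is `Fin.last (2 * A)`. -/
noncomputable def hardRef (A : ℕ) (C : ℝ) (i : Fin (2 * A + 1)) : ℝ :=
  if (i : ℕ) < 2 * A then 1 / (2 * A * C) else (C - 1) / C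

/-- The reward `⟨θ*, φ(a_i)⟩` of the hard instance, where `θ* = e_1 + ⋯ + e_A`. -/
noncomputable def hardReward (A : ℕ) (i : Fin (2 * A + 1)) : ℝ :=
  if (i : ℕ) < A then 1 else 0

/-- The arms of reward `1` in the hard instance, `a_1, …, a_A` in the paper's numbering. -/
def rewardedArms (A : ℕ) : Finset (Fin (2 * A + 1)) :=
  {i | (i : ℕ) < A}

theorem mem_rewardedArms {i : Fin (2 * A + 1)} : i ∈ rewardedArms A ↔ (i : ℕ) < A := by
  simp [rewardedArms]

theorem card_rewardedArms (A : ℕ) : #(rewardedArms A) = A := by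
  rw [rewardedArms, Fin.card_filter_val_lt]
  omega

theorem hardRef_of_mem_rewardedArms {i : Fin (2 * A + 1)} (hi : i ∈ rewardedArms A) :
    hardRef A C i = 1 / (2 * A * C) :=
  if_pos (by have := mem_rewardedArms.1 hi; omega)

theorem hardReward_of_mem_rewardedArms {i : Fin (2 * A + 1)} (hi : i ∈ rewardedArms A) :
    hardReward A i = 1 :=
  if_pos (mem_rewardedArms.1 hi)

theorem hardReward_of_notMem_rewardedArms {i : Fin (2 * A + 1)} (hi : i ∉ rewardedArms A) :
    hardReward A i = 0 :=
  if_neg (mt mem_rewardedArms.2 hi)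

theorem hardReward_le_one (i : Fin (2 * A + 1)) : hardReward A i ≤ 1 := by
  rw [hardReward]
  split_ifs <;> norm_num

theorem hardRef_pos (hA : 1 ≤ A) (hC : 1 < C) (i : Fin (2 * A + 1)) : 0 < hardRef A C i := by
  have : 0 < C - 1 := sub_pos.2 hC
  rw [hardRef]
  split_ifs <;> positivity

theorem sum_hardRef (hA : A ≠ 0) (hC : C ≠ 0) : ∑ i, hardRef A C i = 1 := by
  have hsplit : ∑ i, hardRef A C i = (2 * A : ℕ) * (1 / (2 * A * C)) + (C - 1) / C := by
    simp [Fin.sum_univ_castSucc, hardRef]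
  rw [hsplit]
  push_cast
  field_simp
  ring

theorem sum_hardRef_rewardedArms (hA : A ≠ 0) :
    ∑ i ∈ rewardedArms A, hardRef A C i = 1 / (2 * C) := by
  rw [sum_congr rfl fun i hi => hardRef_of_mem_rewardedArms hi, sum_const, card_rewardedArms,
    nsmul_eq_mul]
  field_simp

theorem IsMaximizer.le_two_mul_hardRef (h : IsMaximizer η (hardRef A C) (hardReward A) p)
    (hA : 1 ≤ A) (hC : 1 < C) (hη : 0 < η) (j : Fin (2 * A + 1)) :
    p j ≤ 2 * C * hardRef A C j := by
  have hle := h.mul_sum_pref_le_pref hη (s := rewardedArms A) (hardRef_pos hA hC j).le fun i hi =>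
    (hardReward_le_one j).trans_eq (hardReward_of_mem_rewardedArms hi).symm
  rwa [sum_hardRef_rewardedArms (by omega), mul_one_div, div_le_iff₀' (by linarith)] at hle

theorem IsMaximizer.one_sub_inv_le_sum_rewardedArms
    (h : IsMaximizer η (hardRef A C) (hardReward A) p) (hA : 1 ≤ A) (hC : 1 < C) (hη : 0 < η) :
    1 - η⁻¹ ≤ ∑ i ∈ rewardedArms A, p i := by
  have hfirst : 0 ∈ rewardedArms A := mem_rewardedArms.2 hA
  have hgap (j : Fin (2 * A + 1)) (hj : j ∉ rewardedArms A) :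
      hardReward A j + 1 ≤ hardReward A 0 := by
    rw [hardReward_of_notMem_rewardedArms hj, hardReward_of_mem_rewardedArms hfirst, zero_add]
  have hcompl : ∑ j ∈ (rewardedArms A)ᶜ, hardRef A C j ≤ 1 :=
    (sum_le_univ_sum_of_nonneg fun j => (hardRef_pos hA hC j).le).trans_eq
      (sum_hardRef (by omega) (by linarith))
  refine le_trans ?_ (h.one_sub_le_sum_of_gap hη one_pos (hardRef_pos hA hC 0).le hgap)
  rw [mul_one]
  exact sub_le_sub_left (mul_le_of_le_one_right (inv_nonneg.2 hη.le) hcompl) 1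

theorem sum_rewardedArms_div_hardRef (p : Fin (2 * A + 1) → ℝ) :
    ∑ i ∈ rewardedArms A, p i / hardRef A C i = 2 * A * C * ∑ i ∈ rewardedArms A, p i := by
  rw [mul_sum]
  refine sum_congr rfl fun i hi => ?_
  rw [hardRef_of_mem_rewardedArms hi, div_div_eq_mul_div, div_one, mul_comm]

theorem IsMaximizer.mul_one_sub_inv_le_sum_div_hardRef
    (h : IsMaximizer η (hardRef A C) (hardReward A) p) (hA : 1 ≤ A) (hC : 1 < C) (hη : 0 < η) :
    2 * A * C * (1 - η⁻¹) ≤ ∑ i ∈ rewardedArms A, p i / hardRef A C i := by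
  rw [sum_rewardedArms_div_hardRef]
  gcongr
  exact h.one_sub_inv_le_sum_rewardedArms hA hC hη

end HardInstance

theorem stmt12_general (A : ℕ) (hA : 1 ≤ A) (C η : ℝ) (hC : 1 < C) (hη : 0 < η)
    (πref : Fin (2 * A + 1) → ℝ)
    (hπref : ∀ i, πref i = if (i : ℕ) < 2 * A then 1 / (2 * A * C) else (C - 1) / C)
    (r : Fin (2 * A + 1) → ℝ)
    (hr : ∀ i, r i = if (i : ℕ) < A then 1 else 0)
    (πstar : Fin (2 * A + 1) → ℝ) (hstar : IsMaximizer η πref r πstar)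
    (D2 : Fin (2 * A + 1) → ℝ)
    (hD2 : ∀ i, IsLUB
      {x : ℝ | ∃ θ θ' : Fin (2 * A + 1) → ℝ,
        (∀ j, |θ j| ≤ 1) ∧ (∀ j, |θ' j| ≤ 1) ∧
        x = (θ i - θ' i) ^ 2 / ∑ j, πref j * (θ j - θ' j) ^ 2} (D2 i)) :
    (∀ i, πstar i ≤ 2 * C * πref i) ∧ 2 * A * C * (1 - η⁻¹) ≤ ∑ i, πstar i * D2 i := by
  obtain rfl : πref = hardRef A C := funext hπref
  obtain rfl : r = hardReward A := funext hr
  exact ⟨hstar.le_two_mul_hardRef hA hC hη,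
    (hstar.mul_one_sub_inv_le_sum_div_hardRef hA hC hη).trans
      (sum_div_le_sum_mul_of_mem_upperBounds hstar.nonneg
        (fun i => (hardRef_pos hA hC i).le) (fun i => (hD2 i).1) _)⟩

/-- A `(2A+1)`-armed linear bandit instance with standard-basis
features, reference policy `π^ref(aᵢ) = 1/(2AC)` for `i < 2A` and
`π^ref(a_{2A+1}) = (C-1)/C`, true parameter `θ* = ∑_{i<A} eᵢ` (so `r(aᵢ) = 1` for
`i < A` and `0` otherwise), and function class `{a ↦ ⟨θ, φ(a)⟩ : ‖θ‖_∞ ≤ 1}`,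
for which `C^{π*} ≤ 4C` while `D²_{π*} ≥ C·A`. -/
theorem stmt12 (A : ℕ) (hA : 1 ≤ A) (C η : ℝ) (hC : 1 < C) (hη : 2 ≤ η)
    (πref : Fin (2 * A + 1) → ℝ)
    (hπref : ∀ i, πref i = if (i : ℕ) < 2 * A then 1 / (2 * A * C) else (C - 1) / C)
    (r : Fin (2 * A + 1) → ℝ)
    (hr : ∀ i, r i = if (i : ℕ) < A then 1 else 0)
    (πstar : Fin (2 * A + 1) → ℝ) (hstar : IsMaximizer η πref r πstar)
    (D2 : Fin (2 * A + 1) → ℝ)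
    (hD2 : ∀ i, IsLUB
      {x : ℝ | ∃ θ θ' : Fin (2 * A + 1) → ℝ,
        (∀ j, |θ j| ≤ 1) ∧ (∀ j, |θ' j| ≤ 1) ∧
        x = (θ i - θ' i) ^ 2 / ∑ j, πref j * (θ j - θ' j) ^ 2} (D2 i)) :
    (∀ i, πstar i ≤ 4 * C * πref i) ∧ C * A ≤ ∑ i, πstar i * D2 i := by
  obtain ⟨hconc, hdiv⟩ :=
    stmt12_general A hA C η hC (two_pos.trans_le hη) πref hπref r hr πstar hstar D2 hD2
  have hAC : 0 ≤ A * C := mul_nonneg A.cast_nonneg (zero_le_one.trans hC.le)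
  exact ⟨fun i => by linarith [hconc i, hstar.nonneg i], by nlinarith [inv_anti₀ two_pos hη]⟩
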